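/- For every l ≥ 0 and every integer k with τ_l + 2 ≤ k ≤ τ_{l+1}: S̄_{k−1} = 2l + 1 if and only if S_k = 0. -/

import Mathlib

noncomputable section

/-- The walk `S` associated with the sign sequence `X : {1,2,…} → {−1,1}`:
`S 0 = 0`, `S n = X 1 + ⋯ + X n`. -/
def cvWalk (X : ℕ → ℤ) (n : ℕ) : ℤ := ∑ j ∈ Finset.Icc 1 n, X j

/-- The crossing times of `S`: `τ 0 = 0` and
`τ (l+1) = min {i > τ l : S (i-1) * S (i+1) < 0}`. -/
def cvTau (X : ℕ → ℤ) : ℕ → ℕ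
  | 0 => 0
  | l + 1 => sInf {i : ℕ | cvTau X l < i ∧ cvWalk X (i - 1) * cvWalk X (i + 1) < 0}

/-- The increments of the Csaki–Vincze transform `S̄ = T(S)`:
`X̄ j = Σ_{l ≥ 0} (−1)^(l+1) · X 1 · X (j+1) · 1_{τ l + 1 ≤ j ≤ τ (l+1)}`
(the sum may be truncated to `l ≤ j` since `l ≤ τ l` whenever `τ l + 1 ≤ j`). -/
def cvXbar (X : ℕ → ℤ) (j : ℕ) : ℤ :=
  ∑ l ∈ Finset.range (j + 1),
    (-1 : ℤ) ^ (l + 1) * X 1 * X (j + 1) *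
      (if cvTau X l + 1 ≤ j ∧ j ≤ cvTau X (l + 1) then 1 else 0)

/-- The Csaki–Vincze transform `S̄ = T(S)`. -/
def cvSbar (X : ℕ → ℤ) (n : ℕ) : ℤ := ∑ j ∈ Finset.Icc 1 n, cvXbar X j

/-- `Ȳ`-type process of a walk `f`: `max_{0 ≤ k ≤ n} f k − f n`. -/
def cvYof (f : ℕ → ℤ) (n : ℕ) : ℤ :=
  (Finset.range (n + 1)).sup' Finset.nonempty_range_add_one f - f n

/-- `Ȳ n = max_{0 ≤ k ≤ n} S̄ k − S̄ n`. -/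
def cvYbar (X : ℕ → ℤ) (n : ℕ) : ℤ := cvYof (cvSbar X) n

theorem cvWalk_succ (X : ℕ → ℤ) (n : ℕ) : cvWalk X (n + 1) = cvWalk X n + X (n + 1) := by
  unfold cvWalk
  rw [Finset.sum_Icc_succ_top (by omega)]

theorem cvSbar_succ (X : ℕ → ℤ) (n : ℕ) : cvSbar X (n + 1) = cvSbar X n + cvXbar X (n + 1) := by
  unfold cvSbar
  rw [Finset.sum_Icc_succ_top (by omega)]

theorem cvTau_spec (X : ℕ → ℤ)
    (hinf : {i : ℕ | 1 ≤ i ∧ cvWalk X (i - 1) * cvWalk X (i + 1) < 0}.Infinite) (l : ℕ) :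
    cvTau X l < cvTau X (l + 1) ∧
      cvWalk X (cvTau X (l + 1) - 1) * cvWalk X (cvTau X (l + 1) + 1) < 0 := by
  obtain ⟨i, hi, hlt⟩ := hinf.exists_gt (cvTau X l)
  have hne : {i : ℕ | cvTau X l < i ∧ cvWalk X (i - 1) * cvWalk X (i + 1) < 0}.Nonempty :=
    ⟨i, hlt, hi.2⟩
  exact Nat.sInf_mem hne

theorem cvTau_min (X : ℕ → ℤ) (l i : ℕ) (h1 : cvTau X l < i) (h2 : i < cvTau X (l + 1)) :
    ¬ cvWalk X (i - 1) * cvWalk X (i + 1) < 0 := by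
  intro h
  have : cvTau X (l + 1) ≤ i := Nat.sInf_le ⟨h1, h⟩
  omega

theorem cvXbar_eq (X : ℕ → ℤ) (hmono : StrictMono (cvTau X)) (l j : ℕ)
    (h1 : cvTau X l < j) (h2 : j ≤ cvTau X (l + 1)) :
    cvXbar X j = (-1 : ℤ) ^ (l + 1) * X 1 * X (j + 1) := by
  unfold cvXbar
  rw [Finset.sum_eq_single l]
  · rw [if_pos ⟨h1, h2⟩, mul_one]
  · intro b _ hb
    rw [if_neg, mul_zero]
    rintro ⟨h3, h4⟩
    rcases lt_or_gt_of_ne hb with h | h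
    · have := hmono.monotone (show b + 1 ≤ l from h)
      omega
    · have := hmono.monotone (show l + 1 ≤ b from h)
      omega
  · intro h
    have := hmono.le_apply (x := l)
    simp at h
    omega

theorem cv_block (X : ℕ → ℤ) (hX : ∀ j, 1 ≤ j → X j = 1 ∨ X j = -1)
    (hmono : StrictMono (cvTau X)) (l : ℕ)
    (e : ℤ) (he : e = (-1) ^ l * X 1) (he2 : e = 1 ∨ e = -1)
    (hS : cvSbar X (cvTau X l) = 2 * l) (hW : cvWalk X (cvTau X l + 1) = e) (d : ℕ)
    (hd : cvTau X l + d ≤ cvTau X (l + 1)) :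
    cvSbar X (cvTau X l + d) = 2 * l + 1 - e * cvWalk X (cvTau X l + d + 1) := by
  induction d with
  | zero =>
    simp only [add_zero]
    rw [hS, hW]
    rcases he2 with h | h <;> rw [h] <;> ring
  | succ d ih =>
    have ih := ih (by omega)
    rw [← add_assoc, cvSbar_succ, ih, cvXbar_eq X hmono l _ (by omega) (by omega),
      cvWalk_succ X (cvTau X l + d + 1), he]
    ring

theorem cv_sign (X : ℕ → ℤ) (hX : ∀ j, 1 ≤ j → X j = 1 ∨ X j = -1) (l : ℕ)
    (e : ℤ) (he2 : e = 1 ∨ e = -1)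
    (hW : cvWalk X (cvTau X l + 1) = e) (d : ℕ)
    (hd : cvTau X l + 1 + d ≤ cvTau X (l + 1)) :
    0 ≤ e * cvWalk X (cvTau X l + 1 + d) ∧
      (d ≠ 0 → 0 ≤ e * cvWalk X (cvTau X l + d)) := by
  induction d with
  | zero =>
    simp only [add_zero]
    rw [hW]
    rcases he2 with h | h <;> rw [h] <;> norm_num
  | succ d ih =>
    obtain ⟨ih1, ih2⟩ := ih (by omega)
    refine ⟨?_, fun _ => by rwa [show cvTau X l + (d + 1) = cvTau X l + 1 + d by ring]⟩
    have hs := cvWalk_succ X (cvTau X l + 1 + d)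
    have hx := hX (cvTau X l + 1 + d + 1) (by omega)
    rw [← add_assoc]
    by_cases hd0 : d = 0
    · subst hd0
      simp only [add_zero] at *
      rcases he2 with h | h <;> rcases hx with h' | h' <;> rw [hs, hW, h, h'] <;> norm_num
    · have ih2 := ih2 hd0
      have hm := cvTau_min X l (cvTau X l + 1 + d) (by omega) (by omega)
      have hs0 := cvWalk_succ X (cvTau X l + d)
      have hx0 := hX (cvTau X l + d + 1) (by omega)
      rw [show cvTau X l + 1 + d - 1 = cvTau X l + d by omega] at hm
      rw [show cvTau X l + d + 1 = cvTau X l + 1 + d by ring] at hs0 hx0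
      by_contra hneg
      apply hm
      generalize cvWalk X (cvTau X l + 1 + d + 1) = a at *
      generalize cvWalk X (cvTau X l + 1 + d) = b at *
      generalize cvWalk X (cvTau X l + d) = c at *
      rcases he2 with h | h <;> subst h
      · have : c = 1 := by omega
        have : a = -1 := by omega
        subst c; omega
      · have : c = -1 := by omega
        have : a = 1 := by omega
        subst c; omega

theorem cv_inv (X : ℕ → ℤ) (hX : ∀ j, 1 ≤ j → X j = 1 ∨ X j = -1)
    (hinf : {i : ℕ | 1 ≤ i ∧ cvWalk X (i - 1) * cvWalk X (i + 1) < 0}.Infinite) (l : ℕ) :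
    cvSbar X (cvTau X l) = 2 * l ∧ cvWalk X (cvTau X l) = 0 ∧
      cvWalk X (cvTau X l + 1) = (-1) ^ l * X 1 := by
  have hmono : StrictMono (cvTau X) := strictMono_nat_of_lt_succ fun l => (cvTau_spec X hinf l).1
  induction l with
  | zero => simp [cvTau, cvSbar, cvWalk]
  | succ l ih =>
    obtain ⟨hS, h0, hW⟩ := ih
    obtain ⟨hlt, hcr⟩ := cvTau_spec X hinf l
    obtain ⟨e, he⟩ : ∃ e : ℤ, e = (-1) ^ l * X 1 := ⟨_, rfl⟩
    have he2 : e = 1 ∨ e = -1 := by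
      rw [he]
      rcases neg_one_pow_eq_or ℤ l with h | h <;> rcases hX 1 le_rfl with h' | h' <;>
        rw [h, h'] <;> norm_num
    rw [← he] at hW
    have hne : cvTau X (l + 1) - 1 ≠ cvTau X l := by
      intro h
      rw [h, h0] at hcr
      simp at hcr
    have hB := cv_block X hX hmono l e he he2 hS hW (cvTau X (l + 1) - cvTau X l) (by omega)
    have hsg := (cv_sign X hX l e he2 hW (cvTau X (l + 1) - 1 - (cvTau X l + 1)) (by omega)).1
    rw [show cvTau X l + (cvTau X (l + 1) - cvTau X l) = cvTau X (l + 1) by omega] at hB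
    rw [show cvTau X l + 1 + (cvTau X (l + 1) - 1 - (cvTau X l + 1)) = cvTau X (l + 1) - 1
      by omega] at hsg
    have hs0 := cvWalk_succ X (cvTau X (l + 1) - 1)
    have hx0 := hX (cvTau X (l + 1) - 1 + 1) (by omega)
    rw [show cvTau X (l + 1) - 1 + 1 = cvTau X (l + 1) by omega] at hs0 hx0
    have hs1 := cvWalk_succ X (cvTau X (l + 1))
    have hx1 := hX (cvTau X (l + 1) + 1) (by omega)
    have key : cvWalk X (cvTau X (l + 1)) = 0 ∧ cvWalk X (cvTau X (l + 1) + 1) = -e := by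
      generalize cvWalk X (cvTau X (l + 1) + 1) = a at *
      generalize cvWalk X (cvTau X (l + 1)) = b at *
      generalize cvWalk X (cvTau X (l + 1) - 1) = c at *
      rcases mul_neg_iff.1 hcr with h | h <;> rcases he2 with h' | h' <;> subst h' <;> omega
    refine ⟨?_, key.1, ?_⟩
    · rw [hB, key.2]
      push_cast
      rcases he2 with h | h <;> rw [h] <;> ring
    · rw [key.2, he]; ring

/-- For every `l ≥ 0` and every `k` with `τ l + 2 ≤ k ≤ τ (l+1)`:
`S̄ (k−1) = 2l + 1` if and only if `S k = 0`. -/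
theorem cv_sbar_eq_odd_iff_walk_zero (X : ℕ → ℤ) (hX : ∀ j, 1 ≤ j → X j = 1 ∨ X j = -1)
    (hinf : {i : ℕ | 1 ≤ i ∧ cvWalk X (i - 1) * cvWalk X (i + 1) < 0}.Infinite)
    (l k : ℕ) (hk1 : cvTau X l + 2 ≤ k) (hk2 : k ≤ cvTau X (l + 1)) :
    cvSbar X (k - 1) = 2 * l + 1 ↔ cvWalk X k = 0 := by
  have hmono : StrictMono (cvTau X) := strictMono_nat_of_lt_succ fun l => (cvTau_spec X hinf l).1
  obtain ⟨hS, h0, hW⟩ := cv_inv X hX hinf l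
  obtain ⟨e, he⟩ : ∃ e : ℤ, e = (-1) ^ l * X 1 := ⟨_, rfl⟩
  have he2 : e = 1 ∨ e = -1 := by
    rw [he]
    rcases neg_one_pow_eq_or ℤ l with h | h <;> rcases hX 1 le_rfl with h' | h' <;>
      rw [h, h'] <;> norm_num
  rw [← he] at hW
  have hB := cv_block X hX hmono l e he he2 hS hW (k - 1 - cvTau X l) (by omega)
  rw [show cvTau X l + (k - 1 - cvTau X l) = k - 1 by omega,
    show k - 1 + 1 = k by omega] at hB
  rw [hB]
  rcases he2 with h | h <;> subst h <;> constructor <;> intro h <;> linarith
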